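/- Decoupling of the two Dirac operators: the twisted Dirac operator on 𝔥 and Kostant's cubic Dirac operator anticommute, D'_𝔥·D_{𝔤/𝔥} + D_{𝔤/𝔥}·D'_𝔥 = 0 in A = U(𝔤) ⊗ Cl(𝔤). -/

import Mathlib

/-!
For `Z ∈ 𝔥` put `θ(Z) = Z ⊗ 1 + 1 ⊗ ads_𝔭(Z)`. Then
`D'_𝔥 = Σ_a (1 ⊗ Z*_a) · θ(Z_a) + 1 ⊗ 2γ_𝔥`, and two facts give the theorem.

* `θ(Z)` commutes with `D_{𝔤/𝔥}`. By `ads_commutator`, `ads_𝔭(Z)` acts on `ι(𝔭)` by commutator as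
  `ad Z`, so the commutator with `θ(Z)` is the natural action of `Z`, and both the quadratic and
  the cubic part of `D_{𝔤/𝔥}` are invariant under it because the canonical tensor `Σ Y_i ⊗ Y*_i`
  is (`sum_dual_invariant`). This is `cubic_invariant` together with the tensor computation in
  the main proof.
* `1 ⊗ ι(W)` with `W ∈ 𝔥` anticommutes with `D_{𝔤/𝔥}`, since the latter is odd in the Clifford
  generators from `𝔭 = 𝔥^⊥`. Hence so does `1 ⊗ γ_𝔥`, a sum of products of three such elements.
-/

open CliffordAlgebra TensorProduct

/-- Invariance of the canonical tensor `Σ Y_i ⊗ Y*_i` under `ad Z`, tested against an arbitrary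
bilinear map `f`. The hypotheses say that `[Z, Y_i]` and `[Z, Y*_i]` are recovered from their
pairings with the dual families. -/
lemma sum_dual_invariant {k g M I : Type*} [Field k] [LieRing g] [LieAlgebra k g]
    [AddCommGroup M] [Module k M] [Fintype I]
    (B : LinearMap.BilinForm k g) (hsymm : ∀ X Y : g, B X Y = B Y X)
    (hinv : ∀ X Y Z : g, B ⁅X, Y⁆ Z = B X ⁅Y, Z⁆) (Y Yd : I → g) (Z : g)
    (h₁ : ∀ i, ⁅Z, Y i⁆ = ∑ j, B (Yd j) ⁅Z, Y i⁆ • Y j)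
    (h₂ : ∀ i, ⁅Z, Yd i⁆ = ∑ j, B (Y j) ⁅Z, Yd i⁆ • Yd j)
    (f : g →ₗ[k] g →ₗ[k] M) :
    ∑ i, f ⁅Z, Y i⁆ (Yd i) + ∑ i, f (Y i) ⁅Z, Yd i⁆ = 0 := by
  have e₁ : ∑ i, f ⁅Z, Y i⁆ (Yd i) = ∑ i, ∑ j, B (Yd j) ⁅Z, Y i⁆ • f (Y j) (Yd i) := by
    refine Finset.sum_congr rfl fun i _ => ?_
    conv_lhs => rw [h₁ i]
    simp [LinearMap.sum_apply]
  have e₂ : ∑ i, f (Y i) ⁅Z, Yd i⁆ = ∑ i, ∑ j, B (Y i) ⁅Z, Yd j⁆ • f (Y j) (Yd i) := by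
    rw [Finset.sum_comm]
    refine Finset.sum_congr rfl fun i _ => ?_
    conv_lhs => rw [h₂ i]
    simp
  rw [e₁, e₂, ← Finset.sum_add_distrib]
  refine Finset.sum_eq_zero fun i _ => ?_
  rw [← Finset.sum_add_distrib]
  refine Finset.sum_eq_zero fun j _ => ?_
  rw [← add_smul, ← hinv, ← lie_skew, map_neg, LinearMap.neg_apply, hsymm, neg_add_cancel,
    zero_smul]

/-- The Clifford relation in polarized form, with the factor `2` forced by `Q X = B X X`. -/
lemma clifford_swap {k g : Type*} [Field k] [AddCommGroup g] [Module k g]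
    (B : LinearMap.BilinForm k g) (hsymm : ∀ X Y : g, B X Y = B Y X)
    (Q : QuadraticForm k g) (hQ : ∀ X : g, Q X = B X X) (x y : g) :
    ι Q x * ι Q y = algebraMap k _ (2 * B x y) - ι Q y * ι Q x := by
  rw [eq_sub_iff_add_eq, ι_mul_ι_add_swap]
  congr 1
  simp only [QuadraticMap.polar, hQ, map_add, LinearMap.add_apply, hsymm y x]
  ring

/-- `-(1/4) Σ Y*_i [Z, Y_i]` acts on Clifford generators by commutator as `ad Z`, on every `c`
which, together with `[Z, c]`, is reproduced by the dual families. -/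
lemma ads_commutator {k g I : Type*} [Field k] [CharZero k] [LieRing g] [LieAlgebra k g]
    [Fintype I] (B : LinearMap.BilinForm k g) (hsymm : ∀ X Y : g, B X Y = B Y X)
    (hinv : ∀ X Y Z : g, B ⁅X, Y⁆ Z = B X ⁅Y, Z⁆)
    (Q : QuadraticForm k g) (hQ : ∀ X : g, Q X = B X X) (Y Yd : I → g) (Z c : g)
    (h₁ : c = ∑ j, B (Yd j) c • Y j)
    (h₂ : ⁅Z, c⁆ = ∑ j, B (Y j) ⁅Z, c⁆ • Yd j) :
    ((-(1/4 : k)) • ∑ i, ι Q (Yd i) * ι Q ⁅Z, Y i⁆) * ι Q c =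
      ι Q c * ((-(1/4 : k)) • ∑ i, ι Q (Yd i) * ι Q ⁅Z, Y i⁆) + ι Q ⁅Z, c⁆ := by
  have key : ∀ i, ι Q (Yd i) * ι Q ⁅Z, Y i⁆ * ι Q c = ι Q c * (ι Q (Yd i) * ι Q ⁅Z, Y i⁆)
      - (2 : k) • (B (Y i) ⁅Z, c⁆ • ι Q (Yd i)) - (2 : k) • (B (Yd i) c • ι Q ⁅Z, Y i⁆) := by
    intro i
    have hB : B ⁅Z, Y i⁆ c = - B (Y i) ⁅Z, c⁆ := by
      rw [← lie_skew, map_neg, LinearMap.neg_apply, hinv]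
    rw [mul_assoc, clifford_swap B hsymm Q hQ _ c, mul_sub, ← mul_assoc (ι Q (Yd i)) (ι Q c),
      clifford_swap B hsymm Q hQ (Yd i) c, hB, ← Algebra.commutes, ← Algebra.smul_def, sub_mul,
      ← Algebra.smul_def, mul_assoc, smul_smul, smul_smul, mul_neg, neg_smul]
    abel
  have s₁ : ∑ i, B (Y i) ⁅Z, c⁆ • ι Q (Yd i) = ι Q ⁅Z, c⁆ := by
    conv_rhs => rw [h₂]
    simp
  have s₂ : ∑ i, B (Yd i) c • ι Q ⁅Z, Y i⁆ = ι Q ⁅Z, c⁆ := by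
    conv_rhs => rw [h₁]
    simp [lie_sum]
  rw [smul_mul_assoc, Finset.sum_mul, Finset.sum_congr rfl fun i _ => key i,
    Finset.sum_sub_distrib, Finset.sum_sub_distrib, ← Finset.mul_sum, ← Finset.smul_sum,
    ← Finset.smul_sum, s₁, s₂, mul_smul_comm]
  module

/-- If `s` acts on Clifford generators from `𝔭` by commutator as `ad Z`, it commutes with the cubic
element `Σ Y*_i Y*_j π_𝔭[Y_i, Y_j]`; here `p` plays the role of `π_𝔭` and commutes with `ad Z`. -/
lemma cubic_invariant {k g I : Type*} [Field k] [LieRing g] [LieAlgebra k g]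
    [Fintype I] (B : LinearMap.BilinForm k g) (hsymm : ∀ X Y : g, B X Y = B Y X)
    (hinv : ∀ X Y Z : g, B ⁅X, Y⁆ Z = B X ⁅Y, Z⁆)
    (Q : QuadraticForm k g) (Y Yd : I → g) (Z : g)
    (h₁ : ∀ i, ⁅Z, Y i⁆ = ∑ j, B (Yd j) ⁅Z, Y i⁆ • Y j)
    (h₂ : ∀ i, ⁅Z, Yd i⁆ = ∑ j, B (Y j) ⁅Z, Yd i⁆ • Yd j)
    (p : g →ₗ[k] g) (hp : ∀ X, ⁅Z, p X⁆ = p ⁅Z, X⁆) (s : CliffordAlgebra Q)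
    (hYd : ∀ i, s * ι Q (Yd i) = ι Q (Yd i) * s + ι Q ⁅Z, Yd i⁆)
    (hpX : ∀ X, s * ι Q (p X) = ι Q (p X) * s + ι Q ⁅Z, p X⁆) :
    s * ∑ i, ∑ j, ι Q (Yd i) * ι Q (Yd j) * ι Q (p ⁅Y i, Y j⁆) =
      (∑ i, ∑ j, ι Q (Yd i) * ι Q (Yd j) * ι Q (p ⁅Y i, Y j⁆)) * s := by
  have key : ∀ i j, s * (ι Q (Yd i) * ι Q (Yd j) * ι Q (p ⁅Y i, Y j⁆)) =
      ι Q (Yd i) * ι Q (Yd j) * ι Q (p ⁅Y i, Y j⁆) * s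
      + ((ι Q (Yd i) * ι Q (Yd j) * ι Q (p ⁅⁅Z, Y i⁆, Y j⁆)
          + ι Q ⁅Z, Yd i⁆ * ι Q (Yd j) * ι Q (p ⁅Y i, Y j⁆))
        + (ι Q (Yd i) * ι Q (Yd j) * ι Q (p ⁅Y i, ⁅Z, Y j⁆⁆)
          + ι Q (Yd i) * ι Q ⁅Z, Yd j⁆ * ι Q (p ⁅Y i, Y j⁆))) := by
    intro i j
    have e := hpX ⁅Y i, Y j⁆
    rw [hp, leibniz_lie, map_add, map_add] at e
    rw [← mul_assoc, ← mul_assoc, hYd i, add_mul, mul_assoc (ι Q (Yd i)) s, hYd j, add_mul,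
      mul_add, add_mul, mul_assoc (ι Q (Yd i)) _ (ι Q (p _)), mul_assoc (ι Q (Yd j)) s, e]
    noncomm_ring
  -- Invariance of the canonical tensor in the first index, the second being fixed.
  have inv₁ : ∀ j, ∑ i, (ι Q (Yd i) * ι Q (Yd j) * ι Q (p ⁅⁅Z, Y i⁆, Y j⁆)
      + ι Q ⁅Z, Yd i⁆ * ι Q (Yd j) * ι Q (p ⁅Y i, Y j⁆)) = 0 := by
    intro j
    rw [Finset.sum_add_distrib]
    exact sum_dual_invariant B hsymm hinv Y Yd Z h₁ h₂
      (LinearMap.mk₂ k (fun x y => ι Q y * ι Q (Yd j) * ι Q (p ⁅x, Y j⁆))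
        (by intros; simp [mul_add]) (by intros; simp) (by intros; simp [add_mul])
        (by intros; simp))
  -- The same in the second index.
  have inv₂ : ∀ i, ∑ j, (ι Q (Yd i) * ι Q (Yd j) * ι Q (p ⁅Y i, ⁅Z, Y j⁆⁆)
      + ι Q (Yd i) * ι Q ⁅Z, Yd j⁆ * ι Q (p ⁅Y i, Y j⁆)) = 0 := by
    intro i
    rw [Finset.sum_add_distrib]
    exact sum_dual_invariant B hsymm hinv Y Yd Z h₁ h₂
      (LinearMap.mk₂ k (fun x y => ι Q (Yd i) * ι Q y * ι Q (p ⁅Y i, x⁆))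
        (by intros; simp [mul_add]) (by intros; simp) (by intros; simp [mul_add, add_mul])
        (by intros; simp))
  simp only [Finset.mul_sum, Finset.sum_mul, key]
  simp only [Finset.sum_add_distrib (ι := I)] at inv₁ inv₂ ⊢
  rw [Finset.sum_comm (f := fun i j => ι Q (Yd i) * ι Q (Yd j) * ι Q (p ⁅⁅Z, Y i⁆, Y j⁆)),
    Finset.sum_comm (f := fun i j => ι Q ⁅Z, Yd i⁆ * ι Q (Yd j) * ι Q (p ⁅Y i, Y j⁆)),
    ← Finset.sum_add_distrib, ← Finset.sum_add_distrib]
  simp only [inv₁, inv₂, Finset.sum_const_zero, add_zero]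

/-- Decoupling of the two Dirac operators: the twisted Dirac operator `D'_𝔥` on `𝔥` and
Kostant's cubic Dirac operator `D_{𝔤/𝔥}` anticommute in `A = U(𝔤) ⊗ Cl(𝔤)`:
`D'_𝔥 · D_{𝔤/𝔥} + D_{𝔤/𝔥} · D'_𝔥 = 0`. -/
theorem dirac_decoupling
    {k : Type*} [Field k] [CharZero k]
    {g : Type*} [LieRing g] [LieAlgebra k g]
    (B : LinearMap.BilinForm k g)
    (hsymm : ∀ X Y : g, B X Y = B Y X)
    (hnondeg : B.Nondegenerate)
    (hinv : ∀ X Y Z : g, B ⁅X, Y⁆ Z = B X ⁅Y, Z⁆)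
    (H : LieSubalgebra k g) (P : Submodule k g)
    (hHnd : ∀ Z ∈ H, (∀ W ∈ H, B Z W = 0) → Z = 0)
    (hP : P = B.orthogonal H.toSubmodule)
    (hcompl : IsCompl H.toSubmodule P)
    (pp : g →ₗ[k] g)
    (hpp_mem : ∀ X : g, pp X ∈ P)
    (hpp_P : ∀ Y ∈ P, pp Y = Y)
    (hpp_H : ∀ Z ∈ H, pp Z = 0)
    {A' : Type*} [Fintype A'] [DecidableEq A']
    (bh : A' → g) (hbh : ∀ a, bh a ∈ H)
    (bhd : A' → g) (hbhd : ∀ a, bhd a ∈ H)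
    (hdualh : ∀ a c, B (bhd a) (bh c) = if a = c then 1 else 0)
    {I : Type*} [Fintype I] [DecidableEq I]
    (bp : I → g) (hbp : ∀ i, bp i ∈ P)
    (bpd : I → g) (hbpd : ∀ i, bpd i ∈ P)
    (hdualp : ∀ i j, B (bpd i) (bp j) = if i = j then 1 else 0)
    (hindep : LinearIndependent k (Sum.elim bh bp))
    (hspan : Submodule.span k (Set.range (Sum.elim bh bp)) = ⊤)
    (Q : QuadraticForm k g) (hQ : ∀ X : g, Q X = B X X)
    (adsp : g → CliffordAlgebra Q)
    (hadsp : ∀ X : g, adsp X = (-(1/4 : k)) • ∑ i, ι Q (bpd i) * ι Q (pp ⁅X, bp i⁆))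
    (γh γp : CliffordAlgebra Q)
    (hγh : γh = (-(1/24 : k)) • ∑ a, ∑ c,
        ι Q (bhd a) * ι Q (bhd c) * ι Q ⁅bh a, bh c⁆)
    (hγp : γp = (-(1/24 : k)) • ∑ i, ∑ j,
        ι Q (bpd i) * ι Q (bpd j) * ι Q (pp ⁅bp i, bp j⁆))
    (Dh' Dgh : UniversalEnvelopingAlgebra k g ⊗[k] CliffordAlgebra Q)
    (hDh' : Dh' = (∑ a, UniversalEnvelopingAlgebra.ι k (bh a) ⊗ₜ[k] ι Q (bhd a))
              + (∑ a, (1 : UniversalEnvelopingAlgebra k g) ⊗ₜ[k] (ι Q (bhd a) * adsp (bh a)))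
              + (1 : UniversalEnvelopingAlgebra k g) ⊗ₜ[k] ((2 : k) • γh))
    (hDgh : Dgh = (∑ i, UniversalEnvelopingAlgebra.ι k (bp i) ⊗ₜ[k] ι Q (bpd i))
              + (1 : UniversalEnvelopingAlgebra k g) ⊗ₜ[k] ((2 : k) • γp)) :
    Dh' * Dgh + Dgh * Dh' = 0 := by
  have hPH : ∀ z ∈ H, ∀ y ∈ P, B z y = 0 := by
    intro z hz y hy
    rw [hP] at hy
    exact hy z hz
  have hbr : ∀ z ∈ H, ∀ y ∈ P, ⁅z, y⁆ ∈ P := by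
    intro z hz y hy
    rw [hP]
    intro w hw
    change B w ⁅z, y⁆ = 0
    rw [← hinv]
    exact hPH _ (H.lie_mem hw hz) y hy
  have hsub : ∀ x, x - pp x ∈ H := by
    intro x
    have hx : x ∈ H.toSubmodule ⊔ P := by rw [hcompl.sup_eq_top]; trivial
    obtain ⟨z, hz, y, hy, rfl⟩ := Submodule.mem_sup.1 hx
    rw [map_add, hpp_H z hz, hpp_P y hy]
    simpa using hz
  have hself : ∀ x y, B (pp x) y = B x (pp y) := by
    intro x y
    have h1 := hPH _ (hsub y) _ (hpp_mem x)
    have h2 := hPH _ (hsub x) _ (hpp_mem y)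
    rw [map_sub, LinearMap.sub_apply, sub_eq_zero] at h1 h2
    rw [hsymm, h1, h2, hsymm]
  -- The projection written in the dual bases; by self-adjointness also with their roles swapped.
  have hexp : ∀ x, pp x = ∑ j, B (bpd j) x • bp j := by
    have : pp = ∑ j, (B (bpd j)).smulRight (bp j) := by
      refine LinearMap.ext_on_range (v := Sum.elim bh bp) hspan ?_
      rintro (a | i)
      · simp [LinearMap.sum_apply, hpp_H _ (hbh a), hsymm (bpd _) (bh a),
          hPH _ (hbh a) _ (hbpd _)]
      · simp [LinearMap.sum_apply, hpp_P _ (hbp i), hdualp]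
    intro x
    conv_lhs => rw [this]
    simp [LinearMap.sum_apply]
  have hexp' : ∀ x, pp x = ∑ j, B (bp j) x • bpd j := by
    intro x
    rw [← sub_eq_zero]
    refine hnondeg.1 _ fun y => ?_
    have hy := congrArg (B x) (hexp y)
    rw [map_sub, LinearMap.sub_apply, hself, hy]
    simp [LinearMap.sum_apply, hsymm x, mul_comm]
  have hP₁ : ∀ c ∈ P, c = ∑ j, B (bpd j) c • bp j := fun c hc => by
    rw [← hexp, hpp_P c hc]
  have hP₂ : ∀ c ∈ P, c = ∑ j, B (bp j) c • bpd j := fun c hc => by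
    rw [← hexp', hpp_P c hc]
  have hppZ : ∀ Z ∈ H, ∀ X, ⁅Z, pp X⁆ = pp ⁅Z, X⁆ := by
    intro Z hZ X
    have h1 := hpp_H _ (H.lie_mem hZ (hsub X))
    rw [lie_sub, map_sub, sub_eq_zero, hpp_P _ (hbr Z hZ _ (hpp_mem X))] at h1
    exact h1.symm
  have hads : ∀ Z ∈ H, ∀ c ∈ P, adsp Z * ι Q c = ι Q c * adsp Z + ι Q ⁅Z, c⁆ := by
    intro Z hZ c hc
    have e : adsp Z = (-(1/4 : k)) • ∑ i, ι Q (bpd i) * ι Q ⁅Z, bp i⁆ := by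
      rw [hadsp]
      simp only [fun i => hpp_P _ (hbr Z hZ _ (hbp i))]
    rw [e]
    exact ads_commutator B hsymm hinv Q hQ bp bpd Z c (hP₁ c hc) (hP₂ _ (hbr Z hZ c hc))
  have hγ : ∀ Z ∈ H, adsp Z * γp = γp * adsp Z := by
    intro Z hZ
    rw [hγp, mul_smul_comm, smul_mul_assoc,
      cubic_invariant B hsymm hinv Q bp bpd Z (fun i => hP₁ _ (hbr Z hZ _ (hbp i)))
        (fun i => hP₂ _ (hbr Z hZ _ (hbpd i))) pp (hppZ Z hZ) (adsp Z)
        (fun i => hads Z hZ _ (hbpd i)) (fun X => hads Z hZ _ (hpp_mem X))]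
  -- `θ(Z)` commutes with `D_{𝔤/𝔥}`.
  have hcomm : ∀ Z ∈ H, (UniversalEnvelopingAlgebra.ι k Z ⊗ₜ[k] 1 + 1 ⊗ₜ[k] adsp Z) * Dgh =
      Dgh * (UniversalEnvelopingAlgebra.ι k Z ⊗ₜ[k] (1 : CliffordAlgebra Q) + 1 ⊗ₜ[k] adsp Z) := by
    intro Z hZ
    have hinvt := sum_dual_invariant B hsymm hinv bp bpd Z
      (fun i => hP₁ _ (hbr Z hZ _ (hbp i))) (fun i => hP₂ _ (hbr Z hZ _ (hbpd i)))
      (LinearMap.mk₂ k (fun x y => UniversalEnvelopingAlgebra.ι k x ⊗ₜ[k] ι Q y)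
        (by intros; rw [map_add, TensorProduct.add_tmul])
        (by intros; rw [map_smul, TensorProduct.smul_tmul'])
        (by intros; rw [map_add, TensorProduct.tmul_add])
        (by intros; rw [map_smul, TensorProduct.tmul_smul]))
    simp only [LinearMap.mk₂_apply] at hinvt
    have hlin : ∀ i, (UniversalEnvelopingAlgebra.ι k Z ⊗ₜ[k] 1 + 1 ⊗ₜ[k] adsp Z) *
        (UniversalEnvelopingAlgebra.ι k (bp i) ⊗ₜ[k] ι Q (bpd i)) =
        (UniversalEnvelopingAlgebra.ι k (bp i) ⊗ₜ[k] ι Q (bpd i)) *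
        (UniversalEnvelopingAlgebra.ι k Z ⊗ₜ[k] (1 : CliffordAlgebra Q) + 1 ⊗ₜ[k] adsp Z) +
        (UniversalEnvelopingAlgebra.ι k ⁅Z, bp i⁆ ⊗ₜ[k] ι Q (bpd i) +
          UniversalEnvelopingAlgebra.ι k (bp i) ⊗ₜ[k] ι Q ⁅Z, bpd i⁆) := by
      intro i
      simp only [add_mul, mul_add, Algebra.TensorProduct.tmul_mul_tmul, one_mul, mul_one,
        hads Z hZ _ (hbpd i), LieHom.map_lie, Ring.lie_def, TensorProduct.sub_tmul,
        TensorProduct.tmul_add]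
      abel
    rw [hDgh, mul_add, Finset.mul_sum, Finset.sum_congr rfl fun i _ => hlin i,
      Finset.sum_add_distrib, Finset.sum_add_distrib, hinvt, add_zero, add_mul (Finset.sum _ _),
      Finset.sum_mul]
    congr 1
    simp only [add_mul, mul_add, Algebra.TensorProduct.tmul_mul_tmul, one_mul, mul_one,
      mul_smul_comm, smul_mul_assoc, hγ Z hZ]
  -- `1 ⊗ ι(W)` with `W ∈ 𝔥` anticommutes with `D_{𝔤/𝔥}`.
  have hanti : ∀ W ∈ H, ((1 : UniversalEnvelopingAlgebra k g) ⊗ₜ[k] ι Q W) * Dgh =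
      - (Dgh * ((1 : UniversalEnvelopingAlgebra k g) ⊗ₜ[k] ι Q W)) := by
    intro W hW
    have hc : ∀ c ∈ P, ι Q W * ι Q c = - (ι Q c * ι Q W) := by
      intro c hc
      rw [clifford_swap B hsymm Q hQ, hPH W hW c hc]
      simp
    have hg : ι Q W * γp = - (γp * ι Q W) := by
      rw [hγp, mul_smul_comm, smul_mul_assoc, ← smul_neg]
      congr 1
      simp only [Finset.mul_sum, Finset.sum_mul, ← Finset.sum_neg_distrib]
      refine Finset.sum_congr rfl fun i _ => Finset.sum_congr rfl fun j _ => ?_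
      rw [← mul_assoc, ← mul_assoc, hc _ (hbpd i), neg_mul, mul_assoc (ι Q (bpd i)),
        hc _ (hbpd j), neg_mul, mul_assoc, neg_mul, mul_assoc (ι Q (bpd j)), hc _ (hpp_mem _)]
      noncomm_ring
    rw [hDgh, mul_add, add_mul, neg_add, Finset.mul_sum, Finset.sum_mul,
      ← Finset.sum_neg_distrib]
    simp only [Algebra.TensorProduct.tmul_mul_tmul, one_mul, mul_one, mul_smul_comm,
      smul_mul_assoc, hg, hc _ (hbpd _), smul_neg, TensorProduct.tmul_neg]
  have hγh_anti : ((1 : UniversalEnvelopingAlgebra k g) ⊗ₜ[k] γh) * Dgh =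
      - (Dgh * ((1 : UniversalEnvelopingAlgebra k g) ⊗ₜ[k] γh)) := by
    have h3 : ∀ a c, ((1 : UniversalEnvelopingAlgebra k g) ⊗ₜ[k]
        (ι Q (bhd a) * ι Q (bhd c) * ι Q ⁅bh a, bh c⁆)) * Dgh = - (Dgh *
        ((1 : UniversalEnvelopingAlgebra k g) ⊗ₜ[k]
        (ι Q (bhd a) * ι Q (bhd c) * ι Q ⁅bh a, bh c⁆))) := by
      intro a c
      have split : ∀ x y : CliffordAlgebra Q, (1 : UniversalEnvelopingAlgebra k g) ⊗ₜ[k] (x * y) =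
          ((1 : UniversalEnvelopingAlgebra k g) ⊗ₜ[k] x) * (1 ⊗ₜ[k] y) := by
        intro x y
        simp
      rw [split, split, mul_assoc, hanti _ (H.lie_mem (hbh a) (hbh c)), mul_neg, mul_assoc,
        ← mul_assoc _ Dgh, hanti _ (hbhd c), neg_mul, mul_neg, ← mul_assoc, ← mul_assoc,
        hanti _ (hbhd a)]
      noncomm_ring
    rw [hγh]
    simp only [TensorProduct.tmul_smul, TensorProduct.tmul_sum, smul_mul_assoc, mul_smul_comm,
      Finset.mul_sum, Finset.sum_mul, h3, Finset.sum_neg_distrib, smul_neg]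
  have hDh : Dh' = (∑ a, ((1 : UniversalEnvelopingAlgebra k g) ⊗ₜ[k] ι Q (bhd a)) *
      (UniversalEnvelopingAlgebra.ι k (bh a) ⊗ₜ[k] 1 + 1 ⊗ₜ[k] adsp (bh a))) +
      (2 : k) • ((1 : UniversalEnvelopingAlgebra k g) ⊗ₜ[k] γh) := by
    rw [hDh']
    simp [mul_add, Finset.sum_add_distrib]
  rw [hDh, add_mul, mul_add, smul_mul_assoc, hγh_anti, mul_smul_comm, Finset.sum_mul,
    Finset.mul_sum]
  have hterm : ∀ a, ((1 : UniversalEnvelopingAlgebra k g) ⊗ₜ[k] ι Q (bhd a)) *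
      (UniversalEnvelopingAlgebra.ι k (bh a) ⊗ₜ[k] 1 + 1 ⊗ₜ[k] adsp (bh a)) * Dgh =
      - (Dgh * (((1 : UniversalEnvelopingAlgebra k g) ⊗ₜ[k] ι Q (bhd a)) *
      (UniversalEnvelopingAlgebra.ι k (bh a) ⊗ₜ[k] 1 + 1 ⊗ₜ[k] adsp (bh a)))) := by
    intro a
    rw [mul_assoc, hcomm _ (hbh a), ← mul_assoc, hanti _ (hbhd a), neg_mul, mul_assoc]
  rw [Finset.sum_congr rfl fun a _ => hterm a, Finset.sum_neg_distrib, smul_neg]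
  abel
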